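/- arXiv:2404.15230 — 2 statements merged into one kernel-verified Lean document; each statement's English description precedes it below -/
import Mathlib

section
/- Let δ be an ordinal and ⟨P_i : i ∈ I⟩ a family of partial orders, each with a greatest element and each strongly δ-strategically closed. Then the full-support product ∏_{i∈I} P_i, ordered coordinatewise, is strongly δ-strategically closed. -/
universe u

/-- An ordinal is *odd* if it is of the form `2 * β + 1`, i.e. `λ + (2n+1)` with `λ`
limit or zero and `n < ω`. (Here `2 * β` denotes `β` copies of `2`, so limits are even.) -/
def Ordinal.IsOddO (α : Ordinal) : Prop := ∃ β : Ordinal, α = 2 * β + 1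

/-- A partial order `P` is *strongly `δ`-strategically closed* if COM has a winning
strategy in the variant of the completeness game of length `δ` in which COM plays at odd
ordinals and INC plays at even ordinals.  A strategy for COM is a function `σ` assigning
to each position (a stage `α` together with the sequence of moves played so far) an
element of `P`; it is winning if, in every legal partial play of length `α < δ` in which
COM has followed `σ` (each move being a lower bound of all previous moves), the player
whose turn it is at stage `α` has a legal move — in particular at odd `α` the move
prescribed by `σ` is a lower bound of all previous moves. -/
def StronglyStrategicallyClosed (δ : Ordinal) (P : Type u) [Preorder P] : Prop :=
  ∃ σ : (α : Ordinal) → ((β : Ordinal) → β < α → P) → P,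
    ∀ α < δ, ∀ f : (β : Ordinal) → β < α → P,
      (∀ (β : Ordinal) (hβ : β < α) (γ : Ordinal) (hγ : γ < α), γ < β → f β hβ ≤ f γ hγ) →
      (∀ (β : Ordinal) (hβ : β < α), β.IsOddO →
        f β hβ = σ β (fun γ hγ => f γ (hγ.trans hβ))) →
      ((α.IsOddO → ∀ (β : Ordinal) (hβ : β < α), σ α f ≤ f β hβ) ∧
        (¬ α.IsOddO → ∃ p : P, ∀ (β : Ordinal) (hβ : β < α), p ≤ f β hβ))

universe v w

/-- The moves made before stage `α` in a completeness game on `P`, as a function on the ordinals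
below `α` in the curried form used by `StronglyStrategicallyClosed`. -/
abbrev GamePosition (α : Ordinal.{w}) (P : Type u) : Type (max u (w + 1)) :=
  ∀ β : Ordinal.{w}, β < α → P

/-- A strategy for COM: a prescribed move at every position. Only its values at odd stages are
ever played. -/
abbrev COMStrategy (P : Type u) : Type (max u (w + 1)) :=
  ∀ α : Ordinal.{w}, GamePosition α P → P

namespace GamePosition

/-- The position reached at the earlier stage `β`. -/
def truncate {α β : Ordinal.{w}} {P : Type u} (f : GamePosition α P) (hβ : β < α) :
    GamePosition β P :=
  fun γ hγ => f γ (hγ.trans hβ)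

/-- `f.IsLowerBound p` says that `p` is a legal next move at the position `f`. -/
def IsLowerBound {α : Ordinal.{w}} {P : Type u} [Preorder P] (f : GamePosition α P) (p : P) :
    Prop :=
  ∀ (β : Ordinal.{w}) (hβ : β < α), p ≤ f β hβ

/-- A position reached by legal moves in which COM has followed `σ` at every odd stage. -/
structure IsPlayOf {α : Ordinal.{w}} {P : Type u} [Preorder P] (f : GamePosition α P)
    (σ : COMStrategy.{u, w} P) : Prop where
  legal : ∀ (β : Ordinal.{w}) (hβ : β < α), (f.truncate hβ).IsLowerBound (f β hβ)
  follows : ∀ (β : Ordinal.{w}) (hβ : β < α), β.IsOddO → f β hβ = σ β (f.truncate hβ)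

end GamePosition

/-- `σ` wins the variant game of length `δ` for COM: at every stage below `δ` of a play of `σ`,
the move prescribed by `σ` is legal if the stage is odd, and INC has some legal move otherwise. -/
def COMStrategy.IsWinning {P : Type u} [Preorder P] (σ : COMStrategy.{u, w} P)
    (δ : Ordinal.{w}) : Prop :=
  ∀ α < δ, ∀ f : GamePosition α P, f.IsPlayOf σ →
    (α.IsOddO → f.IsLowerBound (σ α f)) ∧ (¬ α.IsOddO → ∃ p : P, f.IsLowerBound p)

theorem stronglyStrategicallyClosed_iff_exists_isWinning {P : Type u} [Preorder P]
    {δ : Ordinal.{w}} :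
    StronglyStrategicallyClosed δ P ↔ ∃ σ : COMStrategy.{u, w} P, σ.IsWinning δ := by
  refine exists_congr fun σ => forall₃_congr fun α _ f =>
    ⟨fun hwin hf => ?_, fun hwin hdesc hfollows => ?_⟩
  · exact hwin (fun β hβ γ _ hγβ => hf.legal β hβ γ hγβ) hf.follows
  · exact hwin ⟨fun β hβ γ hγβ => hdesc β hβ γ (hγβ.trans hβ) hγβ, hfollows⟩

section Pi

variable {I : Type v} {P : I → Type u}

/-- The `i`-th coordinate of a position in the product game. -/
def GamePosition.proj {α : Ordinal.{w}} (f : GamePosition α (∀ i, P i)) (i : I) :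
    GamePosition α (P i) :=
  fun β hβ => f β hβ i

/-- The product strategy: COM plays each coordinate of the product game by its own strategy. -/
def COMStrategy.pi (σ : ∀ i, COMStrategy.{u, w} (P i)) : COMStrategy.{max v u, w} (∀ i, P i) :=
  fun α f i => σ i α (f.proj i)

variable [∀ i, Preorder (P i)]

theorem GamePosition.isLowerBound_iff_forall_proj {α : Ordinal.{w}}
    {f : GamePosition α (∀ i, P i)} {p : ∀ i, P i} :
    f.IsLowerBound p ↔ ∀ i, (f.proj i).IsLowerBound (p i) :=
  ⟨fun hp i β hβ => hp β hβ i, fun hp β hβ i => hp i β hβ⟩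

theorem GamePosition.IsPlayOf.proj {α : Ordinal.{w}} {f : GamePosition α (∀ i, P i)}
    {σ : ∀ i, COMStrategy.{u, w} (P i)} (hf : f.IsPlayOf (COMStrategy.pi σ)) (i : I) :
    (f.proj i).IsPlayOf (σ i) where
  legal β hβ := isLowerBound_iff_forall_proj.mp (hf.legal β hβ) i
  follows β hβ hodd := congrFun (hf.follows β hβ hodd) i

theorem COMStrategy.IsWinning.pi {δ : Ordinal.{w}} {σ : ∀ i, COMStrategy.{u, w} (P i)}
    (hσ : ∀ i, (σ i).IsWinning δ) : (COMStrategy.pi σ).IsWinning δ := by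
  intro α hα f hf
  have hwin := fun i => hσ i α hα (f.proj i) (hf.proj i)
  refine ⟨fun hodd => ?_, fun heven => ?_⟩
  · exact GamePosition.isLowerBound_iff_forall_proj.mpr fun i => (hwin i).1 hodd
  · choose p hp using fun i => (hwin i).2 heven
    exact ⟨p, GamePosition.isLowerBound_iff_forall_proj.mpr hp⟩

end Pi

theorem stronglyStrategicallyClosed_pi_general {I : Type v} (P : I → Type u)
    [∀ i, Preorder (P i)] (δ : Ordinal.{w}) (h : ∀ i, StronglyStrategicallyClosed δ (P i)) :
    StronglyStrategicallyClosed δ (∀ i, P i) := by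
  simp only [stronglyStrategicallyClosed_iff_exists_isWinning] at h ⊢
  choose σ hσ using h
  exact ⟨COMStrategy.pi σ, COMStrategy.IsWinning.pi hσ⟩

/-- The full-support product of a family of partial orders with greatest elements, each
strongly `δ`-strategically closed, is strongly `δ`-strategically closed. -/
theorem stronglyStrategicallyClosed_pi {I : Type u} (P : I → Type u)
    [∀ i, PartialOrder (P i)] [∀ i, OrderTop (P i)] (δ : Ordinal)
    (h : ∀ i, StronglyStrategicallyClosed δ (P i)) :
    StronglyStrategicallyClosed δ (∀ i, P i) :=
  stronglyStrategicallyClosed_pi_general P δ h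
end

section
/- Let τ < κ be infinite regular cardinals such that λ^{<τ} < κ for every cardinal λ < κ. Then for every family ⟨a_i : i<κ⟩ of sets with |a_i| < τ for all i < κ, there exist a set I ⊆ κ of cardinality κ and a set r (the root) such that a_i ∩ a_j = r for all distinct i, j ∈ I. -/
universe u

/-!
Suppose every Δ-system inside the family has fewer than `κ` members. For each `r`, fix a maximal
Δ-system `J r` with root `r`. By the arithmetic hypothesis, a set `X` of size `< κ` has fewer than
`κ` subsets of size `< τ`, so closing off along a regular cardinal in `[τ, κ)` gives such an `X`
containing `A j` whenever `j ∈ J r` for some `r ⊆ X` of size `< τ`. (If `τ` is singular, `τ⁺` is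
such a cardinal, since `τ < τ ^ cf τ ≤ τ ^< τ < κ` by König's theorem.) For any index `i`, the trace
`r = A i ∩ X` has size `< τ`, and `A i` meets every member of `J r` exactly in `r`; hence `i ∈ J r`
by maximality. The fewer than `κ` many sets `J r`, each of size `< κ`, thus cover all `κ` indices,
which is impossible since `κ` is regular.
-/

section DeltaSystem

open Set

variable {ι α : Type*}

/-- The subfamily of `A` indexed by `I` is a Δ-system with root `r`. Distinct indices may carry
equal sets, in which case the common value is `r`. -/
def IsDeltaSystem (A : ι → Set α) (r : Set α) (I : Set ι) : Prop :=
  I.Pairwise fun i j => A i ∩ A j = r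

/-- `J` is maximal among the index sets of Δ-systems with root `r` all of whose members contain
`r`. The containment is automatic unless `J` is a singleton. -/
def IsMaximalDeltaSystem (A : ι → Set α) (r : Set α) (J : Set ι) : Prop :=
  Maximal (fun I => I ⊆ {i | r ⊆ A i} ∧ IsDeltaSystem A r I) J

theorem exists_isMaximalDeltaSystem (A : ι → Set α) (r : Set α) :
    ∃ J, IsMaximalDeltaSystem A r J :=
  zorn_subset {I | I ⊆ {i | r ⊆ A i} ∧ IsDeltaSystem A r I} fun c hc hchain =>
    ⟨⋃₀ c, ⟨sUnion_subset fun _ hI => (hc hI).1,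
      (pairwise_sUnion hchain.directedOn).2 fun _ hI => (hc hI).2⟩,
      fun _ => subset_sUnion_of_mem⟩

namespace IsMaximalDeltaSystem

variable {A : ι → Set α} {J : Set ι}

theorem mem_of_forall_inter_eq {r : Set α} (hJ : IsMaximalDeltaSystem A r J) {i : ι}
    (hi : r ⊆ A i) (hinter : ∀ j ∈ J, A i ∩ A j = r) : i ∈ J := by
  refine hJ.mem_of_prop_insert ⟨insert_subset hi hJ.prop.1, ?_⟩
  refine hJ.prop.2.insert fun j hj _ => ⟨hinter j hj, ?_⟩
  rw [inter_comm, hinter j hj]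

theorem mem_of_forall_subset {X : Set α} {i : ι} (hJ : IsMaximalDeltaSystem A (A i ∩ X) J)
    (hX : ∀ j ∈ J, A j ⊆ X) : i ∈ J :=
  hJ.mem_of_forall_inter_eq inter_subset_left fun j hj =>
    (inter_subset_inter_right _ (hX j hj)).antisymm
      (subset_inter inter_subset_left (hJ.prop.1 hj))

end IsMaximalDeltaSystem

end DeltaSystem

section Cardinality

open Cardinal Set

variable {ι α : Type u} {τ θ κ : Cardinal.{u}}

theorem le_two_powerlt (τ : Cardinal.{u}) : τ ≤ 2 ^< τ :=
  le_of_forall_lt fun c hc => (cantor c).trans_le (le_powerlt 2 hc)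

theorem lt_of_forall_powerlt_lt (hℵ : ℵ₀ < κ) (hpow : ∀ l < κ, l ^< τ < κ) : τ < κ :=
  (le_two_powerlt τ).trans_lt (hpow 2 (ofNat_lt_aleph0.trans hℵ))

theorem exists_isRegular_ge_lt_of_forall_powerlt_lt (hℵ : ℵ₀ < κ)
    (hpow : ∀ l < κ, l ^< τ < κ) : ∃ θ : Cardinal.{u}, θ.IsRegular ∧ τ ≤ θ ∧ θ < κ := by
  have hτκ : τ < κ := lt_of_forall_powerlt_lt hℵ hpow
  rcases lt_aleph0_or_isRegular_or_isSingular (c := τ) with hfin | hreg | hsing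
  · exact ⟨ℵ₀, isRegular_aleph0, hfin.le, hℵ⟩
  · exact ⟨τ, hreg, le_rfl, hτκ⟩
  · have hτ_lt : τ < τ ^< τ :=
      (lt_power_cof_ord hsing.aleph0_le).trans_le (le_powerlt τ hsing.cof_ord_lt)
    exact ⟨Order.succ τ, isRegular_succ hsing.aleph0_le, Order.le_succ τ,
      (Order.succ_le_of_lt hτ_lt).trans_lt (hpow τ hτκ)⟩

theorem exists_mk_Iio_toType_ord_eq {c : Cardinal.{u}} (hc : c < τ) :
    ∃ a : τ.ord.ToType, #(Iio a) = c := by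
  have hord : c.ord < Ordinal.type (α := τ.ord.ToType) (· < ·) := by
    rwa [Ordinal.type_toType, ord_lt_ord]
  refine ⟨Ordinal.enum (α := τ.ord.ToType) (· < ·) ⟨c.ord, hord⟩, ?_⟩
  exact (congrArg Ordinal.card (Ordinal.typein_enum _ hord)).trans (card_ord c)

/-- The collection `[S]^{<τ}` of subsets of `S` of cardinality less than `τ`. -/
def smallSubsets (τ : Cardinal.{u}) (S : Set α) : Set (Set α) :=
  {r | r ⊆ S ∧ #r < τ}

theorem mk_smallSubsets_le (τ : Cardinal.{u}) (S : Set α) :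
    #(smallSubsets τ S) ≤ τ * (max #S ℵ₀ ^< τ) := by
  have hcover : smallSubsets τ S ⊆ ⋃ a : τ.ord.ToType, {r | r ⊆ S ∧ #r ≤ #(Iio a)} := by
    rintro r ⟨hrS, hrτ⟩
    obtain ⟨a, ha⟩ := exists_mk_Iio_toType_ord_eq hrτ
    exact mem_iUnion.2 ⟨a, hrS, ha.ge⟩
  calc #(smallSubsets τ S)
      ≤ #(⋃ a : τ.ord.ToType, {r | r ⊆ S ∧ #r ≤ #(Iio a)}) := mk_le_mk_of_subset hcover
    _ ≤ #τ.ord.ToType * ⨆ a : τ.ord.ToType, #{r | r ⊆ S ∧ #r ≤ #(Iio a)} := mk_iUnion_le _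
    _ ≤ τ * (max #S ℵ₀ ^< τ) := by
      rw [mk_ord_toType]
      gcongr
      refine ciSup_le' fun a => (mk_bounded_subset_le S _).trans (le_powerlt _ ?_)
      simpa using mk_Iio_lt a

theorem mk_smallSubsets_lt (hℵ : ℵ₀ < κ) (hpow : ∀ l < κ, l ^< τ < κ) {S : Set α} (hS : #S < κ) :
    #(smallSubsets τ S) < κ :=
  (mk_smallSubsets_le τ S).trans_lt <|
    mul_lt_of_lt hℵ.le (lt_of_forall_powerlt_lt hℵ hpow) (hpow _ (max_lt hS hℵ))

section Closure

variable {o : Type u} [LinearOrder o]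

theorem exists_subset_of_mk_lt_cof {X : o → Set α} (hX : Monotone X) {r : Set α}
    (hr : r ⊆ ⋃ a, X a) (hcof : #r < Order.cof o) : ∃ a, r ⊆ X a := by
  choose stage hstage using fun x : r => mem_iUnion.1 (hr x.2)
  have hbdd : ¬ IsCofinal (range stage) := fun h =>
    ((Order.cof_le h).trans mk_range_le).not_gt hcof
  obtain ⟨a, ha⟩ : ∃ a, ∀ x, stage x < a := by
    simpa only [IsCofinal, not_forall, not_exists, not_and, not_le, forall_mem_range] using hbdd
  exact ⟨a, fun x hx => hX (ha ⟨x, hx⟩).le (hstage ⟨x, hx⟩)⟩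

/-- The `a`-th stage in closing off the empty set under the operation `G`, along a well-order.
Taking the union over all earlier stages treats zero, successor and limit stages alike. -/
def closureStage [WellFoundedLT o] (G : Set α → Set α) (a : o) : Set α :=
  ⋃ b : Iio a, G (closureStage G b.1)
termination_by wellFounded_lt.wrap a
decreasing_by exact b.2

variable [WellFoundedLT o]

theorem subset_closureStage (G : Set α → Set α) {a b : o} (hba : b < a) :
    G (closureStage G b) ⊆ closureStage G a := by
  rw [closureStage.eq_def G a]
  exact subset_iUnion (fun c : Iio a => G (closureStage G c.1)) ⟨b, hba⟩

theorem monotone_closureStage (G : Set α → Set α) :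
    Monotone (closureStage G : o → Set α) := by
  intro a b hab
  rw [closureStage.eq_def G a]
  exact iUnion_subset fun c => subset_closureStage G (c.2.trans_le hab)

theorem mk_closureStage_lt (hκ : κ.IsRegular) (ho : ∀ a : o, #(Iio a) < κ)
    {G : Set α → Set α} (hG : ∀ S : Set α, #S < κ → #(G S) < κ) (a : o) :
    #(closureStage G a) < κ := by
  induction a using WellFoundedLT.induction with
  | ind a ih =>
    rw [closureStage, card_iUnion_lt_iff_forall_of_isRegular hκ (ho a)]
    exact fun b => hG _ (ih b.1 b.2)

end Closure

theorem exists_mk_lt_forall_exists_image_subset (hθ : θ.IsRegular) (hκ : κ.IsRegular) (hθκ : θ < κ)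
    {G : Set α → Set α} (hG : ∀ S : Set α, #S < κ → #(G S) < κ) :
    ∃ X : Set α, #X < κ ∧ ∀ r ⊆ X, #r < θ → ∃ S, r ⊆ S ∧ G S ⊆ X := by
  have hcof : Order.cof θ.ord.ToType = θ := by rw [Ordinal.cof_toType, hθ.cof_ord]
  have : NoMaxOrder θ.ord.ToType := noMaxOrder hθ.aleph0_le
  refine ⟨⋃ a : θ.ord.ToType, closureStage G a, ?_, fun r hrX hrθ => ?_⟩
  · rw [card_iUnion_lt_iff_forall_of_isRegular hκ (by rwa [mk_ord_toType])]
    have hIio : ∀ a : θ.ord.ToType, #(Iio a) < θ := fun a => by simpa using mk_Iio_lt a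
    exact mk_closureStage_lt hκ (fun a => (hIio a).trans hθκ) hG
  · obtain ⟨a, hra⟩ :=
      exists_subset_of_mk_lt_cof (monotone_closureStage G) hrX (hrθ.trans_eq hcof.symm)
    obtain ⟨b, hab⟩ := exists_gt a
    exact ⟨closureStage G a, hra, (subset_closureStage G hab).trans (subset_iUnion _ b)⟩

theorem exists_mk_lt_forall_smallSubsets_image_subset (hκ : κ.IsRegular) (hℵ : ℵ₀ < κ)
    (hpow : ∀ l < κ, l ^< τ < κ) {B : Set α → Set α}
    (hB : ∀ r : Set α, #r < τ → #(B r) < κ) :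
    ∃ X : Set α, #X < κ ∧ ∀ r ∈ smallSubsets τ X, B r ⊆ X := by
  obtain ⟨θ, hθ, hτθ, hθκ⟩ := exists_isRegular_ge_lt_of_forall_powerlt_lt hℵ hpow
  have hG : ∀ S : Set α, #S < κ → #(⋃ r ∈ smallSubsets τ S, B r) < κ := fun S hS =>
    (card_biUnion_lt_iff_forall_of_isRegular hκ (mk_smallSubsets_lt hℵ hpow hS)).2
      fun r hr => hB r hr.2
  obtain ⟨X, hXκ, hX⟩ := exists_mk_lt_forall_exists_image_subset hθ hκ hθκ hG
  refine ⟨X, hXκ, fun r ⟨hrX, hrτ⟩ => ?_⟩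
  obtain ⟨S, hrS, hSX⟩ := hX r hrX (hrτ.trans_le hτθ)
  have hr : r ∈ smallSubsets τ S := ⟨hrS, hrτ⟩
  exact (subset_biUnion_of_mem (u := B) hr).trans hSX

theorem delta_system_lemma_general (hκ : κ.IsRegular) (hℵ : ℵ₀ < κ)
    (hpow : ∀ l < κ, l ^< τ < κ) (hι : #ι = κ) (A : ι → Set α) (hA : ∀ i, #(A i) < τ) :
    ∃ I : Set ι, #I = κ ∧ ∃ r, IsDeltaSystem A r I := by
  choose J hJ using exists_isMaximalDeltaSystem A
  by_contra! hsmall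
  have hJκ : ∀ r, #(J r) < κ := fun r =>
    ((mk_set_le (J r)).trans_eq hι).lt_of_ne fun h => hsmall (J r) h r (hJ r).prop.2
  have hτκ : τ < κ := lt_of_forall_powerlt_lt hℵ hpow
  have hUnion : ∀ r, #(⋃ j ∈ J r, A j) < κ := fun r =>
    (card_biUnion_lt_iff_forall_of_isRegular hκ (hJκ r)).2 fun j _ => (hA j).trans hτκ
  obtain ⟨X, hXκ, hX⟩ :=
    exists_mk_lt_forall_smallSubsets_image_subset hκ hℵ hpow fun r _ => hUnion r
  have hcover : ⋃ r ∈ smallSubsets τ X, J r = Set.univ := by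
    refine eq_univ_of_forall fun i => ?_
    have htrace : A i ∩ X ∈ smallSubsets τ X :=
      ⟨inter_subset_right, (mk_le_mk_of_subset inter_subset_left).trans_lt (hA i)⟩
    exact mem_biUnion htrace <| (hJ _).mem_of_forall_subset fun j hj =>
      (subset_biUnion_of_mem (u := A) hj).trans (hX _ htrace)
  have hlt : #(⋃ r ∈ smallSubsets τ X, J r) < κ :=
    (card_biUnion_lt_iff_forall_of_isRegular hκ (mk_smallSubsets_lt hℵ hpow hXκ)).2
      fun r _ => hJκ r
  rw [hcover, mk_univ, hι] at hlt
  exact hlt.false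

end Cardinality

/-- The generalized Δ-system lemma: if `τ < κ` are infinite regular cardinals with
`λ ^< τ < κ` for every `λ < κ`, then every family of `κ` many sets each of cardinality
`< τ` contains a subfamily of cardinality `κ` forming a Δ-system with some root `r`. -/
theorem delta_system_lemma {ι α : Type u} (τ κ : Cardinal.{u})
    (hτ : τ.IsRegular) (hκ : κ.IsRegular) (hlt : τ < κ)
    (hpow : ∀ l : Cardinal.{u}, l < κ → l ^< τ < κ)
    (hι : Cardinal.mk ι = κ) (A : ι → Set α) (hA : ∀ i : ι, Cardinal.mk (A i) < τ) :
    ∃ I : Set ι, Cardinal.mk I = κ ∧ ∃ r : Set α,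
      ∀ i ∈ I, ∀ j ∈ I, i ≠ j → A i ∩ A j = r := by
  obtain ⟨I, hI, r, hr⟩ :=
    delta_system_lemma_general hκ (hτ.aleph0_le.trans_lt hlt) hpow hι A hA
  exact ⟨I, hI, r, fun i hi j hj => hr hi hj⟩
end
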